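/- arXiv:0806.3583 — 2 statements merged into one kernel-verified Lean document; each statement's English description precedes it below -/
import Mathlib

section
/- Fix integers b ≥ 2, n ≥ 1, m ≥ 1 and i_1,…,i_m ∈ {0,…,n−1}, and set i_0 = 0. Then #{A : {1,…,m}×{1,…,n} → {0,…,b−1} such that d(π(A_j)∘⋯∘π(A_1)) = i_j for all 1 ≤ j ≤ m} / b^{nm} = Π_{j=1}^m P_b(i_{j−1}, i_j). In particular, the number of descents after successive independent b-shuffles started at the identity forms a Markov chain on {0,1,…,n−1} with transition matrix P_b. -/
/-- The ranking permutation (0-indexed): `rank v i` is the number of positions `i'`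
whose value is smaller than `v i`, or equal to `v i` but occurring earlier.  This labels
the entries from smallest to largest, breaking ties by position. -/
def rank {n : ℕ} {α : Type*} [LinearOrder α] (v : Fin n → α) (i : Fin n) : Fin n :=
  ⟨(Finset.univ.filter fun i' => v i' < v i ∨ (v i' = v i ∧ i' < i)).card, by
    calc (Finset.univ.filter fun i' => v i' < v i ∨ (v i' = v i ∧ i' < i)).card
        ≤ (Finset.univ.erase i).card := by
          apply Finset.card_le_card
          intro x hx
          rw [Finset.mem_filter] at hx
          rw [Finset.mem_erase]
          refine ⟨?_, Finset.mem_univ x⟩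
          rintro rfl
          rcases hx.2 with h | h
          · exact lt_irrefl _ h
          · exact lt_irrefl _ h.2
      _ < Finset.univ.card := Finset.card_erase_lt_of_mem (Finset.mem_univ i)
      _ = n := by simp⟩

/-- The number of descents of a map `σ : Fin n → Fin n`:
the number of indices `i` with `σ (i+1) < σ i`. -/
noncomputable def descents {n : ℕ} (σ : Fin n → Fin n) : ℕ :=
  Nat.card {i : Fin n // ∃ h : i.1 + 1 < n, σ ⟨i.1 + 1, h⟩ < σ i}

/-- The carries when adding the `n` numbers whose base-`b` digits are the rows of `C`
(column `s`, entry `t`): `carry C 0 = 0` and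
`carry C (s+1) = ⌊(carry C s + Σ_t C s t) / b⌋`. -/
def carry {b n m : ℕ} (C : Fin m → Fin n → Fin b) : ℕ → ℕ
  | 0 => 0
  | s + 1 =>
      if h : s < m then (carry C s + ∑ t, (C ⟨s, h⟩ t : ℕ)) / b
      else carry C s

/-- `tau A j` is the composition `π(A_j) ∘ ⋯ ∘ π(A_1)` of the ranking permutations of the
first `j` columns of `A` (columns `0,…,j-1` in 0-indexed notation). -/
def tau {b n m : ℕ} (A : Fin m → Fin n → Fin b) : ℕ → (Fin n → Fin n)
  | 0 => id
  | s + 1 => if h : s < m then rank (A ⟨s, h⟩) ∘ tau A s else tau A s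


/-- Holte's "amazing matrix": the carries Markov chain transition probability
`P_b(i,j) = b^{-n} · #{(x_1,…,x_n) ∈ {0,…,b−1}^n : jb ≤ i + x_1 + ⋯ + x_n ≤ (j+1)b − 1}`. -/
noncomputable def Pmat (b n : ℕ) (i j : ℕ) : ℝ :=
  (Nat.card {x : Fin n → Fin b //
      j * b ≤ i + ∑ t, (x t : ℕ) ∧ i + ∑ t, (x t : ℕ) ≤ (j + 1) * b - 1} : ℝ) / b ^ n

lemma rank_lt_of {n : ℕ} {α : Type*} [LinearOrder α] (v : Fin n → α) (a c : Fin n)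
    (h : v a < v c ∨ (v a = v c ∧ a < c)) : rank v a < rank v c := by
  rw [Fin.lt_def]
  unfold rank
  dsimp only
  apply Finset.card_lt_card
  rw [Finset.ssubset_iff_of_subset]
  · refine ⟨a, ?_, ?_⟩
    · simpa using h
    · simp
  · intro x hx
    simp only [Finset.mem_filter, Finset.mem_univ, true_and] at hx ⊢
    rcases h with h | ⟨h, h'⟩ <;> rcases hx with hx | ⟨hx, hx'⟩
    · exact Or.inl (hx.trans h)
    · exact Or.inl (hx ▸ h)
    · exact Or.inl (h ▸ hx)
    · exact Or.inr ⟨hx.trans h, hx'.trans h'⟩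

lemma rank_lt_iff {n : ℕ} {α : Type*} [LinearOrder α] (v : Fin n → α) (a c : Fin n) :
    rank v a < rank v c ↔ (v a < v c ∨ (v a = v c ∧ a < c)) := by
  refine ⟨fun h => ?_, rank_lt_of v a c⟩
  by_contra hc
  have : a = c ∨ (v c < v a ∨ (v c = v a ∧ c < a)) := by
    rcases lt_trichotomy (v a) (v c) with h1 | h1 | h1
    · exact absurd (Or.inl h1) hc
    · rcases lt_trichotomy a c with h2 | h2 | h2
      · exact absurd (Or.inr ⟨h1, h2⟩) hc
      · exact Or.inl h2
      · exact Or.inr (Or.inr ⟨h1.symm, h2⟩)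
    · exact Or.inr (Or.inl h1)
  rcases this with rfl | h1
  · exact lt_irrefl _ h
  · exact lt_asymm h (rank_lt_of v c a h1)

lemma rank_bijective {n : ℕ} {α : Type*} [LinearOrder α] (v : Fin n → α) :
    Function.Bijective (rank v) := by
  rw [← Finite.injective_iff_bijective]
  intro a c h
  by_contra hne
  have h1 : ¬ rank v a < rank v c := by rw [h]; exact lt_irrefl _
  have h2 : ¬ rank v c < rank v a := by rw [h]; exact lt_irrefl _
  rw [rank_lt_iff] at h1 h2
  push Not at h1 h2
  have h3 : v a = v c := le_antisymm h2.1 h1.1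
  exact hne (le_antisymm (h2.2 h3.symm) (h1.2 h3))

lemma descents_eq {k : ℕ} (σ : Fin (k + 1) → Fin (k + 1)) :
    descents σ = ∑ i : Fin k, if σ i.succ < σ i.castSucc then 1 else 0 := by
  classical
  unfold descents
  rw [Nat.card_eq_fintype_card, Fintype.card_subtype, Finset.card_filter, Fin.sum_univ_castSucc]
  rw [if_neg (by simp), add_zero]
  refine Finset.sum_congr rfl fun i _ => ?_
  congr 1
  simp only [Fin.val_castSucc, eq_iff_iff]
  constructor
  · rintro ⟨_, h⟩; exact h
  · intro h; exact ⟨by omega, h⟩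

lemma sum_telescope {k : ℕ} (w : Fin (k + 1) → ℤ) :
    w 0 + ∑ i : Fin k, (w i.succ - w i.castSucc) = w (Fin.last k) := by
  rw [Finset.sum_sub_distrib]
  have h1 := Fin.sum_univ_succ w
  have h2 := Fin.sum_univ_castSucc w
  linarith

lemma exists_digit_equiv {k b : ℕ} (e : Fin k → ℕ) (he : ∀ i, e i ≤ 1) :
    ∃ f : (Fin (k + 1) → Fin b) ≃ (Fin (k + 1) → Fin b), ∀ w,
      (∑ i, e i) + ∑ t, (f w t : ℕ) = (w (Fin.last k) : ℕ) +
        b * ∑ i : Fin k, if (w i.succ : ℕ) < w i.castSucc + e i then 1 else 0 := by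
  have key : ∀ (w : Fin (k + 1) → Fin b) (i : Fin k), ∃ x : Fin b,
      (x : ℕ) + e i + w i.castSucc =
        w i.succ + b * (if (w i.succ : ℕ) < w i.castSucc + e i then 1 else 0) := by
    intro w i
    have h1 := (w i.succ).2
    have h2 := (w i.castSucc).2
    have h3 := he i
    split_ifs with h
    · exact ⟨⟨w i.succ + b - w i.castSucc - e i, by omega⟩, by simp only; omega⟩
    · exact ⟨⟨w i.succ - w i.castSucc - e i, by omega⟩, by simp only; omega⟩
  choose g hg using key
  let F : (Fin (k + 1) → Fin b) → (Fin (k + 1) → Fin b) := fun w => Fin.cons (w 0) (g w)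
  have hinj : Function.Injective F := by
    intro w w' h
    have h0 : w 0 = w' 0 := by simpa [F] using congrFun h 0
    have hs : ∀ i, g w i = g w' i := fun i => by simpa [F] using congrFun h i.succ
    funext t
    induction t using Fin.induction with
    | zero => exact h0
    | succ i ih =>
      have e1 := hg w i
      have e2 := hg w' i
      rw [hs i, ih] at e1
      have h1 := (w i.succ).2
      have h2 := (w' i.succ).2
      apply Fin.ext
      split_ifs at e1 e2 <;> omega
  refine ⟨Equiv.ofBijective F (Finite.injective_iff_bijective.1 hinj), fun w => ?_⟩
  rw [Equiv.ofBijective_apply, Fin.sum_univ_succ]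
  simp only [F, Fin.cons_zero, Fin.cons_succ]
  zify
  rw [← sum_telescope (fun t => ((w t : ℕ) : ℤ)), Finset.mul_sum, add_assoc,
    ← Finset.sum_add_distrib, add_left_comm, ← Finset.sum_add_distrib]
  congr 1
  refine Finset.sum_congr rfl fun i _ => ?_
  have := hg w i
  zify at this
  linarith

lemma step_card {n b : ℕ} (hn : 1 ≤ n) (hb : 2 ≤ b) (τ : Fin n → Fin n)
    (hτ : Function.Bijective τ) (j : ℕ) :
    Nat.card {v : Fin n → Fin b // descents (rank v ∘ τ) = j} =
    Nat.card {x : Fin n → Fin b //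
      j * b ≤ descents τ + ∑ t, (x t : ℕ) ∧ descents τ + ∑ t, (x t : ℕ) ≤ (j + 1) * b - 1} := by
  obtain ⟨k, rfl⟩ : ∃ k, n = k + 1 := ⟨n - 1, by omega⟩
  obtain ⟨f, hf⟩ := exists_digit_equiv (b := b)
    (fun i : Fin k => if τ i.succ < τ i.castSucc then 1 else 0)
    (fun i => by split_ifs <;> simp)
  let E : (Fin (k + 1) → Fin b) ≃ (Fin (k + 1) → Fin b) :=
    ((Equiv.ofBijective τ hτ).symm.arrowCongr (Equiv.refl (Fin b))).trans f
  refine Nat.card_congr (E.subtypeEquiv fun v => ?_)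
  have hE : E v = f (v ∘ τ) := rfl
  have hd : descents (rank v ∘ τ) = ∑ i : Fin k,
      if ((v ∘ τ) i.succ : ℕ) < (v ∘ τ) i.castSucc +
        (if τ i.succ < τ i.castSucc then 1 else 0) then 1 else 0 := by
    rw [descents_eq]
    refine Finset.sum_congr rfl fun i _ => ?_
    congr 1
    simp only [Function.comp_apply, rank_lt_iff, eq_iff_iff]
    simp only [Fin.lt_def, Fin.ext_iff]
    split_ifs <;> omega
  have h := hf (v ∘ τ)
  rw [← hd, ← descents_eq] at h
  rw [hE, h]
  have hl := ((v ∘ τ) (Fin.last k)).2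
  generalize (((v ∘ τ) (Fin.last k) : Fin b) : ℕ) = l at hl ⊢
  generalize descents (rank v ∘ τ) = d
  constructor
  · rintro rfl
    have : (d + 1) * b = b * d + b := by ring
    have : d * b = b * d := by ring
    omega
  · rintro ⟨h1, h2⟩
    have h3 : 1 ≤ (j + 1) * b := Nat.mul_pos (by omega) (by omega)
    apply le_antisymm
    · by_contra hc
      have : (j + 1) * b ≤ d * b := Nat.mul_le_mul_right b (by omega)
      have : d * b = b * d := by ring
      omega
    · by_contra hc
      have : (d + 1) * b ≤ j * b := Nat.mul_le_mul_right b (by omega)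
      have : (d + 1) * b = b * d + b := by ring
      omega

lemma tau_bijective {b n m : ℕ} (A : Fin m → Fin n → Fin b) (s : ℕ) :
    Function.Bijective (tau A s) := by
  induction s with
  | zero => exact Function.bijective_id
  | succ s ih =>
    rw [tau]
    split_ifs
    · exact (rank_bijective _).comp ih
    · exact ih

lemma tau_snoc {b n m : ℕ} (A : Fin m → Fin n → Fin b) (v : Fin n → Fin b) (s : ℕ)
    (hs : s ≤ m) :
    tau (Fin.snoc A v : Fin (m + 1) → Fin n → Fin b) s = tau A s := by
  induction s with
  | zero => rfl
  | succ s ih =>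
    rw [tau, tau, dif_pos (by omega), dif_pos (by omega), ih (by omega)]
    congr 2
    exact Fin.snoc_castSucc (α := fun _ => Fin n → Fin b) v A ⟨s, by omega⟩

lemma tau_snoc_last {b n m : ℕ} (A : Fin m → Fin n → Fin b) (v : Fin n → Fin b) :
    tau (Fin.snoc A v : Fin (m + 1) → Fin n → Fin b) (m + 1) = rank v ∘ tau A m := by
  rw [tau, dif_pos (by omega), tau_snoc A v m le_rfl]
  congr 2
  exact Fin.snoc_last (α := fun _ => Fin n → Fin b) v A

lemma chain_aux (b n : ℕ) (hb : 2 ≤ b) (hn : 1 ≤ n) (i : ℕ → ℕ) (h0 : i 0 = 0) (m : ℕ) :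
    (Nat.card {A : Fin m → Fin n → Fin b //
        ∀ j : Fin m, descents (tau A (j.1 + 1)) = i (j.1 + 1)} : ℝ) / (b : ℝ) ^ (n * m) =
      ∏ j ∈ Finset.range m, Pmat b n (i j) (i (j + 1)) := by
  induction m with
  | zero => simp
  | succ m ih =>
    have hlast : ∀ A : Fin m → Fin n → Fin b,
        (∀ j : Fin m, descents (tau A (j.1 + 1)) = i (j.1 + 1)) →
        descents (tau A m) = i m := by
      intro A hA
      cases m with
      | zero =>
        obtain ⟨k, rfl⟩ : ∃ k, n = k + 1 := ⟨n - 1, by omega⟩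
        rw [h0, descents_eq]
        refine Finset.sum_eq_zero fun t _ => if_neg ?_
        simp [tau, Fin.lt_def]
      | succ m => exact hA (Fin.last m)
    have hcard : Nat.card {A : Fin (m + 1) → Fin n → Fin b //
          ∀ j : Fin (m + 1), descents (tau A (j.1 + 1)) = i (j.1 + 1)} =
        Nat.card {A : Fin m → Fin n → Fin b //
          ∀ j : Fin m, descents (tau A (j.1 + 1)) = i (j.1 + 1)} *
        Nat.card {x : Fin n → Fin b // i (m + 1) * b ≤ i m + ∑ t, (x t : ℕ) ∧
          i m + ∑ t, (x t : ℕ) ≤ (i (m + 1) + 1) * b - 1} := by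
      let Q : (Fin m → Fin n → Fin b) → Prop :=
        fun A => ∀ j : Fin m, descents (tau A (j.1 + 1)) = i (j.1 + 1)
      have e1 : {A : Fin (m + 1) → Fin n → Fin b //
          ∀ j : Fin (m + 1), descents (tau A (j.1 + 1)) = i (j.1 + 1)} ≃
          Σ A : {A // Q A}, {v : Fin n → Fin b // descents (rank v ∘ tau A.1 m) = i (m + 1)} :=
        { toFun := fun A => by
            have hA := A.2
            rw [← Fin.snoc_init_self A.1] at hA
            refine ⟨⟨Fin.init A.1, fun j => ?_⟩, ⟨A.1 (Fin.last m), ?_⟩⟩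
            · have := hA j.castSucc
              rw [tau_snoc _ _ _ (by simp only [Fin.val_castSucc]; omega)] at this
              exact this
            · have := hA (Fin.last m)
              simp only [Fin.val_last] at this
              rw [tau_snoc_last] at this
              exact this
          invFun := fun p => ⟨Fin.snoc p.1.1 p.2.1, fun j => by
            induction j using Fin.lastCases with
            | last => simp only [Fin.val_last]; rw [tau_snoc_last]; exact p.2.2
            | cast j =>
              rw [tau_snoc _ _ _ (by simp only [Fin.val_castSucc]; omega)]
              exact p.1.2 j⟩
          left_inv := fun A => by
            apply Subtype.ext
            exact Fin.snoc_init_self A.1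
          right_inv := fun p => by
            obtain ⟨⟨A, hA⟩, ⟨v, hv⟩⟩ := p
            have h1 : Fin.init (Fin.snoc A v : Fin (m + 1) → Fin n → Fin b) = A :=
              Fin.init_snoc (α := fun _ => Fin n → Fin b) v A
            have h2 : (Fin.snoc A v : Fin (m + 1) → Fin n → Fin b) (Fin.last m) = v :=
              Fin.snoc_last (α := fun _ => Fin n → Fin b) v A
            exact Sigma.subtype_ext (Subtype.ext h1) h2 }
      rw [Nat.card_congr e1, Nat.card_sigma]
      rw [Finset.sum_congr rfl (fun A _ => by
        rw [step_card hn hb (tau A.1 m) (tau_bijective _ _), hlast A.1 A.2])]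
      rw [Finset.sum_const, smul_eq_mul, Finset.card_univ, ← Nat.card_eq_fintype_card]
    rw [Finset.prod_range_succ, ← ih, hcard, Pmat, div_mul_div_comm, ← pow_add]
    push_cast
    rfl

/-- **Theorem 1 of Diaconis–Fulman**: the number of descents in successive `b`-shuffles of
`n` cards forms a Markov chain on `{0,1,…,n−1}` with Holte's carries transition matrix
`P_b`.  Explicitly, with `i 0 = 0` and targets `i 1,…,i m ∈ {0,…,n−1}`, the probability
that `d(π(A_j)∘⋯∘π(A_1)) = i j` for all `1 ≤ j ≤ m` (for a uniformly random digit array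
`A`) equals `Π_{j=1}^m P_b(i_{j−1}, i_j)`. -/
theorem descent_chain_transition_matrix (b n m : ℕ) (hb : 2 ≤ b) (hn : 1 ≤ n) (hm : 1 ≤ m)
    (i : ℕ → ℕ) (h0 : i 0 = 0) (hi : ∀ j, 1 ≤ j → j ≤ m → i j < n) :
    (Nat.card {A : Fin m → Fin n → Fin b //
        ∀ j : Fin m, descents (tau A (j.1 + 1)) = i (j.1 + 1)} : ℝ) / (b : ℝ) ^ (n * m) =
      ∏ j ∈ Finset.range m, Pmat b n (i j) (i (j + 1)) := by
  exact chain_aux b n hb hn i h0 m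
end

section
/- Fix integers k ≥ 1, b ≥ 2 and r ≥ 0, and let K_b be the k×k multiplication-carries matrix. Then for every 0 ≤ j ≤ k−1, the r-step transition probability from carry 0 satisfies (K_b)^r(0,j) = (1/b^r)·#{x ∈ ℤ : 0 ≤ x < b^r and j·b^r ≤ k·x < (j+1)·b^r}; equivalently, the carry after processing r uniform digits (least significant first) of a number x starting from carry 0 is ⌊k·x/b^r⌋. -/
/-- The multiplication-carries matrix as a `k × k` real matrix: `K_b(i,j)` is the
transition probability from carry `i` to carry `j` when multiplying a number with
uniform random base-`b` digits by `k`, i.e.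
`K_b(i,j) = (1/b)·#{d ∈ {0,…,b−1} : ⌊(i + k·d)/b⌋ = j}`. -/
noncomputable def KM (k b : ℕ) : Matrix (Fin k) (Fin k) ℝ :=
  Matrix.of fun i j =>
    (Nat.card {d : Fin b // ((i : ℕ) + k * (d : ℕ)) / b = (j : ℕ)} : ℝ) / b

lemma sum_range_mul_aux (f : ℕ → ℝ) (n m : ℕ) :
    ∑ y ∈ Finset.range (n * m), f y
      = ∑ x ∈ Finset.range n, ∑ d ∈ Finset.range m, f (x + n * d) := by
  induction m with
  | zero => simp
  | succ m ih =>
    rw [Nat.mul_succ, Finset.sum_range_add, ih, ← Finset.sum_add_distrib]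
    refine Finset.sum_congr rfl fun x _ => ?_
    rw [Finset.sum_range_succ, add_comm x (n * m)]

lemma card_aux (n : ℕ) (p : ℕ → Prop) [DecidablePred p] :
    (Nat.card {x : Fin n // p (x : ℕ)} : ℝ) = ∑ x ∈ Finset.range n, if p x then (1 : ℝ) else 0 := by
  rw [Nat.card_eq_fintype_card, Fintype.card_subtype, Finset.sum_range, Finset.sum_boole]

lemma KM_pow_aux (k b : ℕ) (hk : 1 ≤ k) (hb : 2 ≤ b) (r : ℕ) : ∀ j : Fin k,
    (KM k b ^ r) ⟨0, hk⟩ j =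
      (∑ x ∈ Finset.range (b ^ r), if k * x / b ^ r = (j : ℕ) then (1 : ℝ) else 0) /
        (b : ℝ) ^ r := by
  induction r with
  | zero =>
    intro j
    simp [Matrix.one_apply, Fin.ext_iff, -Finset.sum_boole]
  | succ r ih =>
    intro j
    have hb0 : 0 < b := by omega
    have hbr : 0 < b ^ r := Nat.pow_pos hb0
    rw [pow_succ, Matrix.mul_apply]
    have h1 : ∀ i : Fin k, (KM k b ^ r) ⟨0, hk⟩ i * KM k b i j =
        (∑ x ∈ Finset.range (b ^ r), if k * x / b ^ r = (i : ℕ) then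
          (∑ d ∈ Finset.range b, if ((i : ℕ) + k * d) / b = (j : ℕ) then (1 : ℝ) else 0)
          else 0) / (b : ℝ) ^ (r + 1) := by
      intro i
      have h2 : KM k b i j =
          (∑ d ∈ Finset.range b, if ((i : ℕ) + k * d) / b = (j : ℕ) then (1 : ℝ) else 0) / b := by
        rw [← card_aux b (fun d => ((i : ℕ) + k * d) / b = (j : ℕ))]
        rfl
      rw [ih, h2, div_mul_div_comm, ← pow_succ, Finset.sum_mul]
      congr 1
      refine Finset.sum_congr rfl fun x _ => ?_
      rw [ite_mul, one_mul, zero_mul]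
    rw [Finset.sum_congr rfl fun i _ => h1 i, ← Finset.sum_div, Finset.sum_comm]
    congr 1
    rw [pow_succ b r, sum_range_mul_aux]
    refine Finset.sum_congr rfl fun x hx => ?_
    have hx' := Finset.mem_range.mp hx
    have hlt : k * x / b ^ r < k := by
      rw [Nat.div_lt_iff_lt_mul hbr]
      exact Nat.mul_lt_mul_of_pos_left hx' hk
    rw [Finset.sum_eq_single (⟨k * x / b ^ r, hlt⟩ : Fin k)]
    · rw [if_pos rfl]
      refine Finset.sum_congr rfl fun d _ => ?_
      have : k * (x + b ^ r * d) / (b ^ r * b) = (k * x / b ^ r + k * d) / b := by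
        rw [← Nat.div_div_eq_div_mul, mul_add, mul_left_comm, Nat.add_mul_div_left _ _ hbr]
      rw [this]
    · intro i _ hi
      rw [if_neg]
      intro h
      exact hi (Fin.ext h.symm)
    · intro h
      exact absurd (Finset.mem_univ _) h

/-- **The `r`-step transition probabilities of the multiplication-carries chain** (from
the proof of Proposition 8 of Diaconis–Fulman): started from carry `0`,
`K_b^r(0,j) = (1/b^r)·#{0 ≤ x < b^r : j·b^r ≤ k·x < (j+1)·b^r}`. -/
theorem Kmat_power_entry (k b : ℕ) (hk : 1 ≤ k) (hb : 2 ≤ b) (r : ℕ) (j : Fin k) :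
    (KM k b ^ r) ⟨0, hk⟩ j =
      (Nat.card {x : Fin (b ^ r) //
          (j : ℕ) * b ^ r ≤ k * (x : ℕ) ∧ k * (x : ℕ) < ((j : ℕ) + 1) * b ^ r} : ℝ) /
        (b : ℝ) ^ r := by
  rw [KM_pow_aux k b hk hb r j]
  rw [card_aux (b ^ r) (fun x => (j : ℕ) * b ^ r ≤ k * x ∧ k * x < ((j : ℕ) + 1) * b ^ r)]
  congr 1
  refine Finset.sum_congr rfl fun x _ => ?_
  have hbr : 0 < b ^ r := Nat.pow_pos (by omega)
  have : k * x / b ^ r = (j : ℕ) ↔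
      (j : ℕ) * b ^ r ≤ k * x ∧ k * x < ((j : ℕ) + 1) * b ^ r := by
    rw [← Nat.le_div_iff_mul_le hbr, ← Nat.div_lt_iff_lt_mul hbr]
    omega
  simp only [this]
end
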